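/- Let σ = {b_{1}, b_{j_2}, …, b_k} ⊆ B with subscripts 1 < j_2 < … < k ≤ m, and suppose σ ∈ M. Then σ ∉ 𝒮_{b_i} for all i ∈ {1,…,d+1} if and only if the following four conditions hold: (1) j_2 ≤ d+1; (2) σ \ {b_1} ∉ M; (3) k = j_2 + m − d − 1; and (4) σ \ {b_{j_2}} ∉ M. -/

import Mathlib

open Finset

/-- The graph `G_m^d` on vertex set `Fin m ⊕ Fin m` (0-based indexing):
`Sum.inl i` is the vertex `a_{i+1}` and `Sum.inr j` is the vertex `b_{j+1}` of the paper;
`a_i` is adjacent to `b_j` iff `(j - i) mod m ∈ {0, …, d-1}`. -/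
def Gmd (m d : ℕ) : SimpleGraph (Fin m ⊕ Fin m) :=
  SimpleGraph.fromRel (fun u v =>
    ∃ i j : Fin m, u = Sum.inl i ∧ v = Sum.inr j ∧ (j.val + m - i.val) % m < d)

/-- A finite set of vertices is independent iff no two of its elements are adjacent. -/
def IsInd (m d : ℕ) (σ : Finset (Fin m ⊕ Fin m)) : Prop :=
  ∀ u ∈ σ, ∀ v ∈ σ, ¬ (Gmd m d).Adj u v

/-- The face poset `P` of the independence complex `Ind (G_m^d)` (ordered by `⊆`),
including the empty simplex. -/
def faceP (m d : ℕ) : Set (Finset (Fin m ⊕ Fin m)) := {σ | IsInd m d σ}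

/-- One step of the matching construction: `S_x(T) = {σ ∈ T | x ∉ σ, σ ∪ {x} ∈ T}`. -/
def stepS {α : Type*} [DecidableEq α] (x : α) (T : Set (Finset α)) : Set (Finset α) :=
  {σ | σ ∈ T ∧ x ∉ σ ∧ insert x σ ∈ T}

/-- The survivors of one step: `T \ (S_x(T) ∪ μ_x(S_x(T)))`. -/
def stepSurv {α : Type*} [DecidableEq α] (x : α) (T : Set (Finset α)) : Set (Finset α) :=
  T \ (stepS x T ∪ (insert x) '' (stepS x T))

/-- Iterating the matching construction along a list of vertices. -/
def phase {α : Type*} [DecidableEq α] (T : Set (Finset α)) (l : List α) : Set (Finset α) :=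
  l.foldl (fun T x => stepSurv x T) T

/-- The list `a_1, …, a_m`. -/
def listA (m : ℕ) : List (Fin m ⊕ Fin m) := (List.finRange m).map Sum.inl
/-- The list `b_1, …, b_m`. -/
def listB (m : ℕ) : List (Fin m ⊕ Fin m) := (List.finRange m).map Sum.inr

/-- `S_{a_{i+1}}` (0-based `i`): the set matched with `a_{i+1}` at stage `i+1` of phase one. -/
def Sa (m d : ℕ) (i : Fin m) : Set (Finset (Fin m ⊕ Fin m)) :=
  stepS (Sum.inl i) (phase (faceP m d) ((listA m).take i.val))

/-- `M = P \ (S_1 ∪ μ_1(S_1))`, the simplices surviving phase one. -/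
def setM (m d : ℕ) : Set (Finset (Fin m ⊕ Fin m)) := phase (faceP m d) (listA m)

/-- `S_{b_{i+1}}` (0-based `i`): the set matched with `b_{i+1}` at stage `i+1` of phase two. -/
def Sb (m d : ℕ) (i : Fin m) : Set (Finset (Fin m ⊕ Fin m)) :=
  stepS (Sum.inr i) (phase (setM m d) ((listB m).take i.val))

/-- `𝒮_{a_{i+1}} = S_{a_{i+1}} ∪ μ_{a_{i+1}}(S_{a_{i+1}})`. -/
def scriptSa (m d : ℕ) (i : Fin m) : Set (Finset (Fin m ⊕ Fin m)) :=
  Sa m d i ∪ (insert (Sum.inl i)) '' (Sa m d i)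

/-- `𝒮_{b_{i+1}} = S_{b_{i+1}} ∪ μ_{b_{i+1}}(S_{b_{i+1}})`. -/
def scriptSb (m d : ℕ) (i : Fin m) : Set (Finset (Fin m ⊕ Fin m)) :=
  Sb m d i ∪ (insert (Sum.inr i)) '' (Sb m d i)

/-- The critical cells `C = P \ (S ∪ μ(S))`. -/
def setC (m d : ℕ) : Set (Finset (Fin m ⊕ Fin m)) :=
  faceP m d \ ((⋃ i : Fin m, scriptSa m d i) ∪ (⋃ i : Fin m, scriptSb m d i))

/-- The matching relation: `MatchRel σ τ` iff `τ = μ(σ)` for `σ ∈ S = S_1 ∪ S_2`. -/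
def MatchRel (m d : ℕ) (σ τ : Finset (Fin m ⊕ Fin m)) : Prop :=
  (∃ i : Fin m, σ ∈ Sa m d i ∧ τ = insert (Sum.inl i) σ) ∨
  (∃ i : Fin m, σ ∈ Sb m d i ∧ τ = insert (Sum.inr i) σ)

/-- `B_{s+1} = {b_{s+1}, b_{s+2}, …, b_{s+m-d}}` (0-based `s`, subscripts mod `m`). -/
def Bset (m d : ℕ) (s : Fin m) : Finset (Fin m ⊕ Fin m) :=
  (Finset.univ.filter (fun j : Fin m => (j.val + m - s.val) % m < m - d)).image Sum.inr

/-- `b_{n+1} ∈ σ` (0-based subscript `n`). -/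
def hasB (m : ℕ) (σ : Finset (Fin m ⊕ Fin m)) (n : ℕ) : Prop :=
  ∃ j : Fin m, j.val = n ∧ Sum.inr j ∈ σ

/-- `σ ⊆ B`. -/
def onlyB (m : ℕ) (σ : Finset (Fin m ⊕ Fin m)) : Prop :=
  ∀ v ∈ σ, ∃ j : Fin m, v = Sum.inr j

/-- Property `P_l` of the paper, with parameter `j1` (0-based: the paper's `j_1 - 1`, so
`1 ≤ j1 ≤ d`).  With 0-based subscripts `i_r = (r-1)(d+1)`, `j_r = j1 + (r-1)(d+1)` and
`k = m + j1 - (d+1)`:  σ ∈ M, σ ⊆ B, the `2l` smallest subscripts of σ are exactly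
`0 = i_1, j_1, i_2, j_2, …, i_l, j_l`, the largest subscript is `k`, and
`σ \ {b_{i_r}} ∉ M`, `σ \ {b_{j_r}} ∉ M` for all `1 ≤ r ≤ l`. -/
def propP (m d l j1 : ℕ) (σ : Finset (Fin m ⊕ Fin m)) : Prop :=
  σ ∈ setM m d ∧ onlyB m σ ∧ 1 ≤ j1 ∧ j1 ≤ d ∧
  (∀ r, 1 ≤ r → r ≤ l → hasB m σ ((r-1)*(d+1)) ∧ hasB m σ (j1 + (r-1)*(d+1))) ∧
  (∀ j : Fin m, Sum.inr j ∈ σ → j.val ≤ j1 + (l-1)*(d+1) →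
      ∃ r, 1 ≤ r ∧ r ≤ l ∧ (j.val = (r-1)*(d+1) ∨ j.val = j1 + (r-1)*(d+1))) ∧
  hasB m σ (m + j1 - (d+1)) ∧
  (∀ j : Fin m, Sum.inr j ∈ σ → j.val ≤ m + j1 - (d+1)) ∧
  (∀ r, 1 ≤ r → r ≤ l → ∀ j : Fin m,
      (j.val = (r-1)*(d+1) ∨ j.val = j1 + (r-1)*(d+1)) → σ.erase (Sum.inr j) ∉ setM m d)

/-!
In phase one, `a_i` can be toggled exactly when it has no neighbour in the simplex, so `M` consists
of the `σ ⊆ B` whose set `s` of 0-based subscripts meets every cyclic window of `d` consecutive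
residues modulo `m`. These sets form an upper set, and a set surviving stage `0` of phase two is one
in which `0` is needed: for the least nonzero element `j` and the greatest element `k` of `s`, this
means that the gap `m + j - k` around `0` exceeds `d`.

If all nonzero elements are at least `i` and inserting any `x < i` would shrink the gap to at most
`d`, then no later stage before `i` can match `s`, because inserting `x` makes `0` removable. Hence
a set with gap larger than `d + 1` is matched at stage `i = k + d + 1 - m`, by inserting `i`, and a
set with gap `d + 1` reaches stage `j`, where it is matched if and only if `s \ {j}` still meets
every window. Otherwise it survives through stage `d`: no `x ∈ (j, d]` lies in `s`, as `j` would
then have been removable, and `s ∪ {x}` is gone since it was matched at stage `j`.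
-/

section Matching

variable {α β : Type*} [DecidableEq α] [DecidableEq β]

theorem mem_stepSurv_iff {x : α} {T : Set (Finset α)} {σ : Finset α} :
    σ ∈ stepSurv x T ↔
      σ ∈ T ∧ (x ∉ σ → insert x σ ∉ T) ∧ (x ∈ σ → σ.erase x ∉ T) := by
  refine and_congr_right fun hσ => ⟨fun h => ⟨fun hx hT => ?_, fun hx hT => ?_⟩, ?_⟩
  · exact h (Or.inl ⟨hσ, hx, hT⟩)
  · have hins : insert x (σ.erase x) = σ := insert_erase hx
    exact h (Or.inr ⟨σ.erase x, ⟨hT, notMem_erase x σ, hins.symm ▸ hσ⟩, hins⟩)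
  · rintro ⟨hins, her⟩ (⟨-, hx, hT⟩ | ⟨τ, ⟨hτ, hx, -⟩, rfl⟩)
    · exact hins hx hT
    · exact her (mem_insert_self x τ) ((erase_insert hx).symm ▸ hτ)

theorem phase_append_singleton (T : Set (Finset α)) (l : List α) (x : α) :
    phase T (l ++ [x]) = stepSurv x (phase T l) :=
  List.foldl_append

theorem map_mem_phase_map_iff (f : α ↪ β) (T : Set (Finset β)) (l : List α) (σ : Finset α) :
    σ.map f ∈ phase T (l.map f) ↔ σ ∈ phase {τ | τ.map f ∈ T} l := by
  induction l using List.reverseRecOn generalizing σ with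
  | nil => rfl
  | append_singleton l x ih =>
    rw [List.map_append, List.map_singleton, phase_append_singleton, phase_append_singleton,
      mem_stepSurv_iff, mem_stepSurv_iff, ← map_insert, ← map_erase, mem_map', ih, ih, ih]

theorem mem_phase_range_iff {T : Set (Finset ℕ)} {n : ℕ} {s : Finset ℕ} :
    s ∈ phase T (List.range n) ↔
      s ∈ T ∧ ∀ i < n, (i ∉ s → insert i s ∉ phase T (List.range i)) ∧
        (i ∈ s → s.erase i ∉ phase T (List.range i)) := by
  induction n with
  | zero => simp [phase]
  | succ n ih =>
    rw [List.range_succ, phase_append_singleton, mem_stepSurv_iff, ih, Nat.forall_lt_succ_right,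
      and_assoc]

theorem phase_range_subset (T : Set (Finset ℕ)) (n : ℕ) : phase T (List.range n) ⊆ T :=
  fun _ h => (mem_phase_range_iff.1 h).1

theorem erase_zero_notMem_of_mem_phase_range {T : Set (Finset ℕ)} (hT : IsUpperSet T) {n : ℕ}
    (hn : 0 < n) {s : Finset ℕ} (hs : s ∈ phase T (List.range n)) : s.erase 0 ∉ T := by
  obtain ⟨hsT, hstep⟩ := mem_phase_range_iff.1 hs
  by_cases h0 : 0 ∈ s
  · exact (hstep 0 hn).2 h0
  · exact absurd (hT (subset_insert 0 s) hsT) ((hstep 0 hn).1 h0)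

theorem mem_phase_indepSet_iff (G : SimpleGraph α) {l : List α}
    (hl : ∀ x ∈ l, ∀ y ∈ l, ¬ G.Adj x y) (σ : Finset α) :
    σ ∈ phase {τ : Finset α | G.IsIndepSet τ} l ↔
      G.IsIndepSet σ ∧ ∀ x ∈ l, ∃ y ∈ σ, G.Adj x y := by
  induction l using List.reverseRecOn generalizing σ with
  | nil => simp [phase]
  | append_singleton l x ih =>
    have hxl : ∀ z ∈ l, ¬ G.Adj z x := fun z hz => hl z (by simp [hz]) x (by simp)
    have ih := ih fun y hy z hz => hl y (by simp [hy]) z (by simp [hz])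
    simp only [phase_append_singleton, mem_stepSurv_iff, ih, List.forall_mem_append,
      List.forall_mem_singleton, and_assoc]
    refine and_congr_right fun hσ => and_congr_right fun hdom => ⟨?_, ?_⟩
    · rintro ⟨hins, her⟩
      by_contra! hx
      by_cases hxσ : x ∈ σ
      · refine her hxσ ⟨hσ.mono (by simp), fun z hz => ?_⟩
        obtain ⟨y, hy, hzy⟩ := hdom z hz
        exact ⟨y, mem_erase.2 ⟨fun h => hxl z hz (h ▸ hzy), hy⟩, hzy⟩
      · refine hins hxσ ⟨?_, fun z hz => ?_⟩
        · rw [coe_insert]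
          exact hσ.insert fun y hy _ => ⟨hx y hy, fun h => hx y hy h.symm⟩
        · obtain ⟨y, hy, hzy⟩ := hdom z hz
          exact ⟨y, mem_insert_of_mem hy, hzy⟩
    · rintro ⟨y, hy, hxy⟩
      refine ⟨fun _ h => ?_, fun hx _ => hσ hx hy hxy.ne hxy⟩
      exact h.1 (by simp) (by simp [hy]) hxy.ne hxy

end Matching

section HittingSets

/-- The cyclic window `{w, w + 1, …, w + d - 1}` of residues modulo `m`, represented in
`{0, …, m - 1}`: the (0-based) subscripts of the neighbours of `a_{w+1}` in `G_m^d`. -/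
def cyclicWindow (m d w : ℕ) : Finset ℕ := {j ∈ range m | (j + m - w) % m < d}

/-- The sets of natural numbers meeting every cyclic window of length `d` modulo `m`. Restricted to
subsets of `{0, …, m - 1}` these are the subscript sets of the elements of `M`; larger numbers are
allowed, and irrelevant, so that the family is an upper set. -/
def hittingSets (m d : ℕ) : Set (Finset ℕ) := {s | ∀ w < m, ∃ j ∈ s, j ∈ cyclicWindow m d w}

variable {m d : ℕ} {s : Finset ℕ}

theorem mem_cyclicWindow_iff {w j : ℕ} (hw : w < m) :
    j ∈ cyclicWindow m d w ↔ j < m ∧ (w ≤ j ∧ j < w + d ∨ j < w ∧ j + m < w + d) := by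
  rw [cyclicWindow, mem_filter, mem_range]
  refine and_congr_right fun hj => ?_
  rcases le_or_gt w j with h | h
  · rw [Nat.sub_add_comm h, Nat.add_mod_right, Nat.mod_eq_of_lt (by omega)]
    omega
  · rw [Nat.mod_eq_of_lt (by omega)]
    omega

theorem isUpperSet_hittingSets : IsUpperSet (hittingSets m d) := fun _ _ hst hs w hw =>
  let ⟨j, hj, hjw⟩ := hs w hw
  ⟨j, hst hj, hjw⟩

theorem erase_zero_mem_hittingSets (hs : s ∈ hittingSets m d) {j k : ℕ} (hj : j ∈ s) (hj0 : 0 < j)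
    (hk : k ∈ s) (hjk : j ≤ k) (hkm : k < m) (hgap : m + j ≤ k + d) :
    s.erase 0 ∈ hittingSets m d := by
  intro w hw
  obtain ⟨l, hl, hlw⟩ := hs w hw
  rw [mem_cyclicWindow_iff hw] at hlw
  rcases Nat.eq_zero_or_pos l with rfl | hl0
  · by_cases hwk : w ≤ k ∧ k < w + d
    · exact ⟨k, mem_erase.2 ⟨by omega, hk⟩, (mem_cyclicWindow_iff hw).2 (by omega)⟩
    · exact ⟨j, mem_erase.2 ⟨by omega, hj⟩, (mem_cyclicWindow_iff hw).2 (by omega)⟩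
  · exact ⟨l, mem_erase.2 ⟨by omega, hl⟩, (mem_cyclicWindow_iff hw).2 hlw⟩

theorem erase_zero_notMem_hittingSets {j k : ℕ} (hj : j ∈ lowerBounds (s.erase 0 : Set ℕ))
    (hk : k ∈ upperBounds (s : Set ℕ)) (hkm : k < m) (hgap : k + d < m + j) :
    s.erase 0 ∉ hittingSets m d := by
  intro hs
  -- The window starting just after `k`, cyclically, ends before `j`.
  obtain ⟨w, hw, hwk⟩ : ∃ w < m, w = k + 1 ∨ w = 0 ∧ k + 1 = m := by
    rcases Nat.lt_or_eq_of_le hkm with h | h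
    · exact ⟨k + 1, h, Or.inl rfl⟩
    · exact ⟨0, by omega, Or.inr ⟨rfl, h⟩⟩
  obtain ⟨l, hl, hlw⟩ := hs w hw
  rw [mem_cyclicWindow_iff hw] at hlw
  have hjl : j ≤ l := hj hl
  have hlk : l ≤ k := hk (mem_of_mem_erase hl)
  omega

theorem erase_mem_hittingSets_of_between (hs : s ∈ hittingSets m d) (h0 : 0 ∈ s) {j x : ℕ}
    (hj0 : 0 < j) (hjx : j < x) (hx : x ∈ s) (hxd : x ≤ d) (hxm : x < m) :
    s.erase j ∈ hittingSets m d := by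
  intro w hw
  obtain ⟨l, hl, hlw⟩ := hs w hw
  rw [mem_cyclicWindow_iff hw] at hlw
  by_cases hlj : l = j
  · by_cases hw0 : w = 0 ∨ m < w + d
    · exact ⟨0, mem_erase.2 ⟨by omega, h0⟩, (mem_cyclicWindow_iff hw).2 (by omega)⟩
    · exact ⟨x, mem_erase.2 ⟨by omega, hx⟩, (mem_cyclicWindow_iff hw).2 (by omega)⟩
  · exact ⟨l, mem_erase.2 ⟨hlj, hl⟩, (mem_cyclicWindow_iff hw).2 hlw⟩

theorem mem_phase_range_hittingSets (hs : s ∈ hittingSets m d) (hs0 : s.erase 0 ∉ hittingSets m d)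
    {i k : ℕ} (hi : i ∈ lowerBounds (s.erase 0 : Set ℕ)) (hk : k ∈ s.erase 0) (hkm : k < m)
    (hgap : m + i ≤ k + d + 1) : s ∈ phase (hittingSets m d) (List.range i) := by
  refine mem_phase_range_iff.2 ⟨hs, fun x hx => ⟨fun hxs hins => ?_, fun hxs her => ?_⟩⟩
  · have hx0 : 0 < x := by
      rw [Nat.pos_iff_ne_zero]
      rintro rfl
      exact hs0 ((erase_eq_of_notMem hxs).symm ▸ hs)
    have hik : i ≤ k := hi hk
    -- The gap from `k` to the new element `x` is at most `d`, so `0` is no longer needed.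
    refine erase_zero_notMem_of_mem_phase_range isUpperSet_hittingSets hx0 hins ?_
    exact erase_zero_mem_hittingSets (isUpperSet_hittingSets (subset_insert x s) hs)
      (mem_insert_self x s) hx0 (mem_insert_of_mem (mem_of_mem_erase hk)) (by omega) hkm (by omega)
  · rcases Nat.eq_zero_or_pos x with rfl | hx0
    · exact hs0 her
    · exact absurd (hi (mem_erase.2 ⟨hx0.ne', hxs⟩)) hx.not_ge

variable {j k : ℕ}

theorem gap_lt_of_erase_zero_notMem (hs : s ∈ hittingSets m d)
    (hj : IsLeast (s.erase 0 : Set ℕ) j) (hk : IsGreatest (s : Set ℕ) k) (hkm : k < m)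
    (hs0 : s.erase 0 ∉ hittingSets m d) : k + d < m + j := by
  obtain ⟨hj0, hjs⟩ := mem_erase.1 hj.1
  by_contra! hgap
  exact hs0 (erase_zero_mem_hittingSets hs hjs (by omega) hk.1 (hk.2 hjs) hkm hgap)

theorem le_of_mem_lowerBounds_erase_zero (hs : s ∈ hittingSets m d)
    (hj : j ∈ lowerBounds (s.erase 0 : Set ℕ)) (hm : 1 < m) (hdm : d < m) : j ≤ d := by
  obtain ⟨l, hl, hlw⟩ := hs 1 hm
  rw [mem_cyclicWindow_iff hm] at hlw
  have hjl : j ≤ l := hj (mem_erase.2 ⟨by omega, hl⟩)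
  omega

theorem sub_le_of_mem_upperBounds (hs : s ∈ hittingSets m d) (hk : k ∈ upperBounds (s : Set ℕ))
    (hd : 0 < d) (hdm : d ≤ m) : m - d ≤ k := by
  have hw : m - d < m := by omega
  obtain ⟨l, hl, hlw⟩ := hs (m - d) hw
  rw [mem_cyclicWindow_iff hw] at hlw
  have hlk : l ≤ k := hk hl
  omega

theorem gap_eq_of_mem_phase_range {n : ℕ} (hs : s ∈ phase (hittingSets m d) (List.range n))
    (hj : IsLeast (s.erase 0 : Set ℕ) j) (hk : IsGreatest (s : Set ℕ) k) (hkm : k < m)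
    (hd : 0 < d) (hjn : j ≤ n) (hgap : k + d < m + j) : k + d + 1 = m + j := by
  obtain ⟨hsH, hstep⟩ := mem_phase_range_iff.1 hs
  have hjk : j ≤ k := hk.2 (mem_of_mem_erase hj.1)
  have hmdk : m - d ≤ k := sub_le_of_mem_upperBounds hsH hk.2 hd (by omega)
  by_contra hne
  obtain ⟨i, hi⟩ : ∃ i, m + i = k + d + 1 := ⟨k + d + 1 - m, by omega⟩
  have his : i ∉ s := fun h =>
    absurd (hj.2 (mem_erase.2 ⟨by omega, h⟩) : j ≤ i) (by omega)
  have hilow : i ∈ lowerBounds ((insert i s).erase 0 : Set ℕ) := by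
    intro l hl
    obtain ⟨hl0, hl⟩ := mem_erase.1 hl
    rcases mem_insert.1 hl with rfl | hl
    · exact le_rfl
    · have hjl : j ≤ l := hj.2 (mem_erase.2 ⟨hl0, hl⟩)
      omega
  have hkup : k ∈ upperBounds (insert i s : Set ℕ) := by
    rintro l (rfl | hl)
    · omega
    · exact hk.2 hl
  -- Inserting `i` leaves a gap of exactly `d + 1` around `0`, so `s` is matched with
  -- `insert i s` at stage `i`.
  exact (hstep i (by omega)).1 his (mem_phase_range_hittingSets
    (isUpperSet_hittingSets (subset_insert i s) hsH)
    (erase_zero_notMem_hittingSets hilow (by rwa [coe_insert]) hkm (by omega)) hilow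
    (mem_erase.2 ⟨by omega, mem_insert_of_mem hk.1⟩) hkm hi.le)

theorem erase_notMem_of_mem_phase_range {n : ℕ}
    (hs : s ∈ phase (hittingSets m d) (List.range n)) (hs0 : s.erase 0 ∉ hittingSets m d)
    (hj : IsLeast (s.erase 0 : Set ℕ) j) (hk : IsGreatest (s : Set ℕ) k) (hkm : k < m)
    (hjn : j < n) (hgap : k + d + 1 = m + j) : s.erase j ∉ hittingSets m d := by
  intro hsj
  obtain ⟨hj0, hjs⟩ := mem_erase.1 hj.1
  have hkj : k ≠ j := by
    rintro rfl
    have hm : 1 < m := by omega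
    obtain ⟨l, hl, hlw⟩ := hsj 1 hm
    rw [mem_cyclicWindow_iff hm] at hlw
    obtain ⟨hlk, hl⟩ := mem_erase.1 hl
    have : l ≤ k := hk.2 hl
    have : k ≤ l := hj.2 (mem_erase.2 ⟨by omega, hl⟩)
    omega
  have hjk : j ≤ k := hk.2 hjs
  refine ((mem_phase_range_iff.1 hs).2 j hjn).2 hjs (mem_phase_range_hittingSets hsj ?_ ?_
    (mem_erase.2 ⟨by omega, mem_erase.2 ⟨hkj, hk.1⟩⟩) hkm hgap.ge)
  · exact fun h => hs0 (isUpperSet_hittingSets (erase_subset_erase 0 (erase_subset j s)) h)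
  · exact fun l hl => hj.2 (erase_subset_erase 0 (erase_subset j s) hl)

theorem insert_notMem_phase_range (hs : s ∈ hittingSets m d) (h0 : 0 ∈ s)
    (hj : IsLeast (s.erase 0 : Set ℕ) j) (hk : IsGreatest (s : Set ℕ) k) (hkm : k < m)
    (hgap : k + d + 1 = m + j) {x : ℕ} (hjx : j < x) (hxd : x ≤ d) (hxm : x < m) :
    insert x s ∉ phase (hittingSets m d) (List.range x) := by
  intro hins
  obtain ⟨hj0, hjs⟩ := mem_erase.1 hj.1
  have hjk : j ≤ k := hk.2 hjs
  have hins0 : (insert x s).erase 0 ∉ hittingSets m d :=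
    erase_zero_notMem_of_mem_phase_range isUpperSet_hittingSets (by omega) hins
  have her : (insert x s).erase j ∈ hittingSets m d :=
    erase_mem_hittingSets_of_between (isUpperSet_hittingSets (subset_insert x s) hs)
      (mem_insert_of_mem h0) (Nat.pos_of_ne_zero hj0) hjx (mem_insert_self x s) hxd hxm
  have hlow : j ∈ lowerBounds (((insert x s).erase j).erase 0 : Set ℕ) := by
    intro l hl
    obtain ⟨hl0, hl⟩ := mem_erase.1 hl
    rcases mem_insert.1 (mem_of_mem_erase hl) with rfl | hl
    · exact hjx.le
    · exact hj.2 (mem_erase.2 ⟨hl0, hl⟩)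
  obtain ⟨l, hlins, hjl, hkl, hlm⟩ : ∃ l ∈ insert x s, j < l ∧ k ≤ l ∧ l < m := by
    rcases hjk.eq_or_lt with rfl | hlt
    · exact ⟨x, mem_insert_self x s, hjx, hjx.le, hxm⟩
    · exact ⟨k, mem_insert_of_mem hk.1, hlt, le_rfl, hkm⟩
  -- `insert x s` is already matched with `(insert x s).erase j` at stage `j`.
  refine ((mem_phase_range_iff.1 hins).2 j hjx).2 (mem_insert_of_mem hjs)
    (mem_phase_range_hittingSets her ?_ hlow
      (mem_erase.2 ⟨by omega, mem_erase.2 ⟨hjl.ne', hlins⟩⟩) hlm (by omega))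
  exact fun h => hins0 (isUpperSet_hittingSets (erase_subset_erase 0 (erase_subset j _)) h)

theorem mem_phase_range_of_gap_eq (hs : s ∈ hittingSets m d) (h0 : 0 ∈ s)
    (hj : IsLeast (s.erase 0 : Set ℕ) j) (hk : IsGreatest (s : Set ℕ) k) (hkm : k < m)
    (hs0 : s.erase 0 ∉ hittingSets m d) (hgap : k + d + 1 = m + j)
    (hsj : s.erase j ∉ hittingSets m d) :
    s ∈ phase (hittingSets m d) (List.range (min (d + 1) m)) := by
  obtain ⟨hj0, hjs⟩ := mem_erase.1 hj.1
  have hjk : j ≤ k := hk.2 hjs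
  have hsurv : s ∈ phase (hittingSets m d) (List.range j) :=
    mem_phase_range_hittingSets hs hs0 hj.2 (mem_erase.2 ⟨by omega, hk.1⟩) hkm hgap.ge
  refine mem_phase_range_iff.2 ⟨hs, fun x hx => ?_⟩
  rcases lt_trichotomy x j with hxj | rfl | hjx
  · exact (mem_phase_range_iff.1 hsurv).2 x hxj
  · exact ⟨fun h => absurd hjs h, fun _ h => hsj (phase_range_subset _ _ h)⟩
  · have hxd : x ≤ d := by omega
    have hxm : x < m := by omega
    refine ⟨fun _ => insert_notMem_phase_range hs h0 hj hk hkm hgap hjx hxd hxm, fun hxs => ?_⟩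
    exact absurd
      (erase_mem_hittingSets_of_between hs h0 (Nat.pos_of_ne_zero hj0) hjx hxs hxd hxm) hsj

theorem mem_phase_range_iff_gap_eq (hs : s ∈ hittingSets m d) (h0 : 0 ∈ s)
    (hj : IsLeast (s.erase 0 : Set ℕ) j) (hk : IsGreatest (s : Set ℕ) k) (hkm : k < m) :
    s ∈ phase (hittingSets m d) (List.range (min (d + 1) m)) ↔
      j ≤ d ∧ s.erase 0 ∉ hittingSets m d ∧ k + d + 1 = m + j ∧ s.erase j ∉ hittingSets m d := by
  constructor
  · intro hsurv
    obtain ⟨hj0, hjs⟩ := mem_erase.1 hj.1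
    have hjk : j ≤ k := hk.2 hjs
    have hs0 : s.erase 0 ∉ hittingSets m d :=
      erase_zero_notMem_of_mem_phase_range isUpperSet_hittingSets (by omega) hsurv
    have hlt : k + d < m + j := gap_lt_of_erase_zero_notMem hs hj hk hkm hs0
    have hjd : j ≤ d := le_of_mem_lowerBounds_erase_zero hs hj.2 (by omega) (by omega)
    have hgap : k + d + 1 = m + j :=
      gap_eq_of_mem_phase_range hsurv hj hk hkm (by omega) (by omega) hlt
    exact ⟨hjd, hs0, hgap,
      erase_notMem_of_mem_phase_range hsurv hs0 hj hk hkm (by omega) hgap⟩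
  · rintro ⟨-, hs0, hgap, hsj⟩
    exact mem_phase_range_of_gap_eq hs h0 hj hk hkm hs0 hgap hsj

end HittingSets

section Phases

variable {m d : ℕ}

theorem Gmd_adj_inl_inr {i j : Fin m} :
    (Gmd m d).Adj (Sum.inl i) (Sum.inr j) ↔ (j.val + m - i.val) % m < d := by
  simp [Gmd]

theorem not_Gmd_adj_inl_inl {i j : Fin m} : ¬ (Gmd m d).Adj (Sum.inl i) (Sum.inl j) := by
  simp [Gmd]

theorem not_Gmd_adj_inr_inr {i j : Fin m} : ¬ (Gmd m d).Adj (Sum.inr i) (Sum.inr j) := by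
  simp [Gmd]

theorem faceP_eq_setOf_isIndepSet : faceP m d = {σ : Finset _ | (Gmd m d).IsIndepSet σ} := by
  ext σ
  refine ⟨fun h u hu v hv _ => h u hu v hv, fun h u hu v hv huv => h hu hv huv.ne huv⟩

theorem map_inr_mem_setM_iff {τ : Finset (Fin m)} :
    τ.map Function.Embedding.inr ∈ setM m d ↔ τ.map Fin.valEmbedding ∈ hittingSets m d := by
  have hA : ∀ x ∈ listA m, ∀ y ∈ listA m, ¬ (Gmd m d).Adj x y := by
    simp [listA, not_Gmd_adj_inl_inl]
  have hB : (Gmd m d).IsIndepSet (τ.map Function.Embedding.inr : Finset (Fin m ⊕ Fin m)) := by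
    intro u hu v hv
    simp only [coe_map, Function.Embedding.inr_apply, Set.mem_image] at hu hv
    obtain ⟨i, -, rfl⟩ := hu
    obtain ⟨j, -, rfl⟩ := hv
    exact fun _ => not_Gmd_adj_inr_inr
  rw [setM, faceP_eq_setOf_isIndepSet, mem_phase_indepSet_iff _ hA, and_iff_right hB]
  simpa [listA, hittingSets, cyclicWindow, Gmd_adj_inl_inr] using
    Fin.forall_iff (p := fun i : Fin m => ∃ j ∈ τ, (j.val + m - i.val) % m < d)

theorem mem_phase_listB_take_iff {n : ℕ} {σ : Finset (Fin m ⊕ Fin m)} :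
    σ ∈ phase (setM m d) ((listB m).take n) ↔
      σ ∈ setM m d ∧ ∀ i : Fin m, i.val < n → σ ∉ scriptSb m d i := by
  induction n with
  | zero => simp [phase]
  | succ n ih =>
    rcases lt_or_ge n m with hn | hn
    · have htake : (listB m).take (n + 1) = (listB m).take n ++ [Sum.inr ⟨n, hn⟩] := by
        rw [List.take_succ_eq_append_getElem (by simpa [listB])]
        simp [listB]
      have hsurv : phase (setM m d) ((listB m).take (n + 1)) =
          phase (setM m d) ((listB m).take n) \ scriptSb m d ⟨n, hn⟩ := by
        rw [htake, phase_append_singleton]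
        rfl
      rw [hsurv, Set.mem_sdiff, ih, and_assoc]
      simp only [Fin.forall_iff, Nat.lt_succ_iff_lt_or_eq]
      grind
    · have hlen : (listB m).length ≤ n := by simpa [listB]
      rw [List.take_of_length_le (hlen.trans n.le_succ), ← List.take_of_length_le hlen, ih]
      have hlt (i : Fin m) : i.val < n + 1 ↔ i.val < n := by omega
      simp only [hlt]

theorem map_inr_mem_phase_listB_take_iff {n : ℕ} {τ : Finset (Fin m)} :
    τ.map Function.Embedding.inr ∈ phase (setM m d) ((listB m).take n) ↔
      τ.map Fin.valEmbedding ∈ phase (hittingSets m d) (List.range (min n m)) := by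
  have hinr : (listB m).take n = ((List.finRange m).take n).map Function.Embedding.inr := by
    rw [listB, List.map_take]
    rfl
  have hval : List.range (min n m) = ((List.finRange m).take n).map Fin.valEmbedding := by
    rw [List.map_take, ← List.take_range]
    simp
  rw [hinr, hval, map_mem_phase_map_iff, map_mem_phase_map_iff]
  simp only [map_inr_mem_setM_iff]

theorem onlyB.exists_map_inr {σ : Finset (Fin m ⊕ Fin m)} (hB : onlyB m σ) :
    ∃ τ : Finset (Fin m), τ.map Function.Embedding.inr = σ := by
  refine ⟨σ.toRight, ?_⟩
  ext (i | j)
  · have hi : Sum.inl i ∉ σ := fun h => by simpa using hB _ h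
    simpa using hi
  · simp

theorem hasB_map_inr_iff {τ : Finset (Fin m)} {n : ℕ} :
    hasB m (τ.map Function.Embedding.inr) n ↔ n ∈ τ.map Fin.valEmbedding := by
  simp [hasB, and_comm]

theorem forall_map_inr_erase_notMem_setM {τ : Finset (Fin m)} {n : ℕ} (hn : n < m) :
    (∀ i : Fin m, i.val = n → (τ.map Function.Embedding.inr).erase (Sum.inr i) ∉ setM m d) ↔
      (τ.map Fin.valEmbedding).erase n ∉ hittingSets m d := by
  have herase_iff (i : Fin m) : (τ.map Function.Embedding.inr).erase (Sum.inr i) ∈ setM m d ↔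
      (τ.map Fin.valEmbedding).erase i ∈ hittingSets m d := by
    rw [← Fin.valEmbedding_apply, ← map_erase, ← map_inr_mem_setM_iff, map_erase]
    rfl
  simp only [herase_iff]
  exact ⟨fun h => h ⟨n, hn⟩ rfl, fun h i hi => hi ▸ h⟩

end Phases

/-- 0-based indices: let `σ = {b_0, b_{j2}, …, b_k} ∈ M` (with `0 < j2` the
second-smallest and `k` the largest subscript).  Then `σ ∉ 𝒮_{b_i}` for all `i ≤ d`
iff (1) `j2 ≤ d`, (2) `σ \ {b_0} ∉ M`, (3) `k = j2 + m - d - 1` and (4) `σ \ {b_{j2}} ∉ M`. -/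
theorem stmt10 (m d : ℕ) (hd : 1 ≤ d) (hdm : d ≤ m)
    (σ : Finset (Fin m ⊕ Fin m)) (hB : onlyB m σ) (hM : σ ∈ setM m d)
    (j2 k : ℕ)
    (h0 : hasB m σ 0)
    (hj2mem : hasB m σ j2) (hj2pos : 0 < j2)
    (hj2min : ∀ j : Fin m, Sum.inr j ∈ σ → j.val = 0 ∨ j2 ≤ j.val)
    (hkmem : hasB m σ k)
    (hkmax : ∀ j : Fin m, Sum.inr j ∈ σ → j.val ≤ k) :
    (∀ i : Fin m, i.val ≤ d → σ ∉ scriptSb m d i) ↔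
      (j2 ≤ d ∧
       (∀ j0 : Fin m, j0.val = 0 → σ.erase (Sum.inr j0) ∉ setM m d) ∧
       k = j2 + m - d - 1 ∧
       (∀ jj : Fin m, jj.val = j2 → σ.erase (Sum.inr jj) ∉ setM m d)) := by
  obtain ⟨τ, rfl⟩ := hB.exists_map_inr
  have hs := map_inr_mem_setM_iff.1 hM
  rw [hasB_map_inr_iff] at h0 hj2mem hkmem
  have hlt : ∀ n ∈ τ.map Fin.valEmbedding, n < m := by simp
  have hj : IsLeast ((τ.map Fin.valEmbedding).erase 0 : Set ℕ) j2 := by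
    refine ⟨mem_erase.2 ⟨hj2pos.ne', hj2mem⟩, ?_⟩
    simpa [lowerBounds, or_iff_not_imp_left] using hj2min
  have hk : IsGreatest (τ.map Fin.valEmbedding : Set ℕ) k := by
    refine ⟨hkmem, ?_⟩
    simpa [upperBounds] using hkmax
  have hphase : (∀ i : Fin m, i.val ≤ d → τ.map Function.Embedding.inr ∉ scriptSb m d i) ↔
      τ.map Fin.valEmbedding ∈ phase (hittingSets m d) (List.range (min (d + 1) m)) := by
    rw [← map_inr_mem_phase_listB_take_iff, mem_phase_listB_take_iff, and_iff_right hM]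
    simp only [Nat.lt_succ_iff]
  have hgap : k = j2 + m - d - 1 ↔ k + d + 1 = m + j2 := by omega
  rw [hphase, forall_map_inr_erase_notMem_setM (hlt 0 h0),
    forall_map_inr_erase_notMem_setM (hlt j2 hj2mem), hgap]
  exact mem_phase_range_iff_gap_eq hs h0 hj hk (hlt k hkmem)
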